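/- Let |Φ_1⟩ = (|001⟩ + |010⟩ + |100⟩)/√3 and |Φ_2⟩ = |000⟩ in ℂ² ⊗ ℂ² ⊗ ℂ². Then no orthonormal basis of the 6-dimensional subspace span{|Φ_1⟩, |Φ_2⟩}^⊥ (the orthogonal complement in ℂ² ⊗ ℂ² ⊗ ℂ²) is perfectly distinguishable by separable operations. -/

import Mathlib

/-!
Write `W` for the first vector `(|001⟩ + |010⟩ + |100⟩)/√3`. Let `B` be an orthonormal basis of the
complement of `W` and `|000⟩`, distinguished by separable operators `Π k = ∑ i, |v i⟩⟨v i|`. Then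
every product vector `v i` occurring in `Π k` is orthogonal to `B j` for `j ≠ k`, so it lies in the
span of `B k`, `W` and `|000⟩`: `v i = β i • B k + γ i • W + δ i • |000⟩`.

The heart of the argument is `exists_coeff_ratio`: for a product vector in such a span, the ratio
`γ / β` is determined by `B k` alone, so `γ i = τ * β i` with `τ` independent of `i`. Now
`Π k` fixes `B k`, which gives `∑ i, |β i|² = 1` and
`∑ i, γ i * conj (β i) = ⟨W, Π k (B k)⟩ = ⟨W, B k⟩ = 0`. Hence `τ = 0`, every `γ i` vanishes, and
`⟨W, Π k W⟩ = 0`. As this holds for all `k`, it contradicts `∑ k, Π k = 1`.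
-/

open Matrix ComplexOrder

/-- A vector in `ℂ² ⊗ ℂ² ⊗ ℂ²` (realized as functions on `Fin 2 × Fin 2 × Fin 2`)
is a product vector if it factorizes. -/
def IsProdVec222 (v : Fin 2 × Fin 2 × Fin 2 → ℂ) : Prop :=
  ∃ a b c : Fin 2 → ℂ, v = fun p => a p.1 * b p.2.1 * c p.2.2

/-- The rank-one operator `|v⟩⟨v|`. -/
def ketBra {ι : Type} (v : ι → ℂ) : Matrix ι ι ℂ :=
  Matrix.vecMulVec v (star v)

/-- An operator on `ℂ² ⊗ ℂ² ⊗ ℂ²` is separable if it is a finite sum of rank-one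
operators `|a⟩⟨a|` with each `a` a product vector (zero counts as separable). -/
def SepOp222 (E : Matrix (Fin 2 × Fin 2 × Fin 2) (Fin 2 × Fin 2 × Fin 2) ℂ) : Prop :=
  ∃ (n : ℕ) (v : Fin n → Fin 2 × Fin 2 × Fin 2 → ℂ),
    (∀ i, IsProdVec222 (v i)) ∧ E = ∑ i, ketBra (v i)

/-- Perfect distinguishability of states on `ℂ² ⊗ ℂ² ⊗ ℂ²` by separable
operations. -/
def PerfDistSep222 {n : ℕ}
    (ρ : Fin n → Matrix (Fin 2 × Fin 2 × Fin 2) (Fin 2 × Fin 2 × Fin 2) ℂ) : Prop :=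
  ∃ M : Fin n → Matrix (Fin 2 × Fin 2 × Fin 2) (Fin 2 × Fin 2 × Fin 2) ℂ,
    (∀ k, (M k).PosSemidef) ∧ (∀ k, SepOp222 (M k)) ∧
    (∑ k, M k) = 1 ∧
    ∀ k j, (M k * ρ j).trace = if k = j then 1 else 0

/-- The basis vector `|ijk⟩` of `ℂ² ⊗ ℂ² ⊗ ℂ²`. -/
def ket3 (i j k : Fin 2) : Fin 2 × Fin 2 × Fin 2 → ℂ :=
  fun p => if p = (i, j, k) then 1 else 0



/-! ### Product vectors in the span of `B`, `W` and `|000⟩` -/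

/-- A product vector whose coordinates of Hamming weight one are `β * B + g` and whose coordinates
of higher weight are `β * B` (that is, a product vector in the span of `B`, `|001⟩ + |010⟩ + |100⟩`
and `|000⟩`) satisfies `g = τ * β` for a scalar `τ` depending only on `B`. -/
lemma exists_coeff_ratio (B : Fin 2 × Fin 2 × Fin 2 → ℂ) :
    ∃ τ : ℂ, ∀ (v : Fin 2 × Fin 2 × Fin 2 → ℂ) (β g : ℂ), IsProdVec222 v →
      v (1, 0, 0) = β * B (1, 0, 0) + g → v (0, 1, 0) = β * B (0, 1, 0) + g →
      v (0, 0, 1) = β * B (0, 0, 1) + g → v (1, 1, 0) = β * B (1, 1, 0) →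
      v (1, 0, 1) = β * B (1, 0, 1) → v (0, 1, 1) = β * B (0, 1, 1) →
      v (1, 1, 1) = β * B (1, 1, 1) → g = τ * β := by
  -- It suffices to treat `β ≠ 0`: for `β = 0`, `g ^ 2 = v 100 * v 010 = v 000 * v 110 = 0`.
  suffices h : ∃ τ : ℂ, ∀ (v : Fin 2 × Fin 2 × Fin 2 → ℂ) (β g : ℂ), β ≠ 0 →
      IsProdVec222 v →
      v (1, 0, 0) = β * B (1, 0, 0) + g → v (0, 1, 0) = β * B (0, 1, 0) + g →
      v (0, 0, 1) = β * B (0, 0, 1) + g → v (1, 1, 0) = β * B (1, 1, 0) →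
      v (1, 0, 1) = β * B (1, 0, 1) → v (0, 1, 1) = β * B (0, 1, 1) →
      v (1, 1, 1) = β * B (1, 1, 1) → g = τ * β by
    obtain ⟨τ, h⟩ := h
    refine ⟨τ, fun v β g hv h1 h2 h3 h4 h5 h6 h7 => ?_⟩
    by_cases hβ : β = 0
    · obtain ⟨a, b, c, rfl⟩ := hv
      subst hβ
      simp only [zero_mul, zero_add, mul_zero] at *
      have : g ^ 2 = 0 := by
        linear_combination (a 0 * b 0 * c 0) * h4 - (a 0 * b 1 * c 0) * h1 - g * h2
      exact (pow_eq_zero_iff two_ne_zero).1 this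
    · exact h v β g hβ hv h1 h2 h3 h4 h5 h6 h7
  by_cases h111 : B (1, 1, 1) = 0
  swap
  · -- `v 100 * v 111 = v 101 * v 110`
    refine ⟨B (1, 0, 1) * B (1, 1, 0) / B (1, 1, 1) - B (1, 0, 0), ?_⟩
    rintro _ β g hβ ⟨a, b, c, rfl⟩ h1 h2 h3 h4 h5 h6 h7
    simp only at h1 h2 h3 h4 h5 h6 h7
    have : (β * B (1, 0, 0) + g) * (β * B (1, 1, 1)) = (β * B (1, 0, 1)) * (β * B (1, 1, 0)) := by
      rw [← h1, ← h7, ← h5, ← h4]; ring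
    field_simp
    apply mul_left_cancel₀ hβ
    linear_combination this
  by_cases h011 : B (0, 1, 1) = 0
  swap
  · -- `v 011 * v 100 = v 111 * v 000 = 0`
    refine ⟨-B (1, 0, 0), ?_⟩
    rintro _ β g hβ ⟨a, b, c, rfl⟩ h1 h2 h3 h4 h5 h6 h7
    simp only at h1 h2 h3 h4 h5 h6 h7
    have : (β * B (0, 1, 1)) * (β * B (1, 0, 0) + g) = 0 := by
      rw [← h1, ← h6]
      linear_combination (a 0 * b 0 * c 0) * (h7.trans (by rw [h111, mul_zero]))
    have := (mul_eq_zero.1 this).resolve_left (mul_ne_zero hβ h011)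
    linear_combination this
  by_cases h101 : B (1, 0, 1) = 0
  swap
  · refine ⟨-B (0, 1, 0), ?_⟩
    rintro _ β g hβ ⟨a, b, c, rfl⟩ h1 h2 h3 h4 h5 h6 h7
    simp only at h1 h2 h3 h4 h5 h6 h7
    have : (β * B (1, 0, 1)) * (β * B (0, 1, 0) + g) = 0 := by
      rw [← h2, ← h5]
      linear_combination (a 0 * b 0 * c 0) * (h7.trans (by rw [h111, mul_zero]))
    have := (mul_eq_zero.1 this).resolve_left (mul_ne_zero hβ h101)
    linear_combination this
  by_cases h110 : B (1, 1, 0) = 0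
  swap
  · refine ⟨-B (0, 0, 1), ?_⟩
    rintro _ β g hβ ⟨a, b, c, rfl⟩ h1 h2 h3 h4 h5 h6 h7
    simp only at h1 h2 h3 h4 h5 h6 h7
    have : (β * B (1, 1, 0)) * (β * B (0, 0, 1) + g) = 0 := by
      rw [← h3, ← h4]
      linear_combination (a 0 * b 0 * c 0) * (h7.trans (by rw [h111, mul_zero]))
    have := (mul_eq_zero.1 this).resolve_left (mul_ne_zero hβ h110)
    linear_combination this
  -- All coordinates of weight at least two vanish, so at most one coordinate of weight one of `v`
  -- is nonzero: `-g` equals at least two of the numbers `β * B 100`, `β * B 010`, `β * B 001`.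
  have key : ∀ (v : Fin 2 × Fin 2 × Fin 2 → ℂ) (β g : ℂ), IsProdVec222 v →
      v (1, 0, 0) = β * B (1, 0, 0) + g → v (0, 1, 0) = β * B (0, 1, 0) + g →
      v (0, 0, 1) = β * B (0, 0, 1) + g → v (1, 1, 0) = β * B (1, 1, 0) →
      v (1, 0, 1) = β * B (1, 0, 1) → v (0, 1, 1) = β * B (0, 1, 1) →
      (β * B (1, 0, 0) + g = 0 ∨ β * B (0, 1, 0) + g = 0) ∧
      (β * B (1, 0, 0) + g = 0 ∨ β * B (0, 0, 1) + g = 0) ∧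
      (β * B (0, 1, 0) + g = 0 ∨ β * B (0, 0, 1) + g = 0) := by
    rintro _ β g ⟨a, b, c, rfl⟩ h1 h2 h3 h4 h5 h6
    simp only [h110, h101, h011, mul_zero] at h1 h2 h3 h4 h5 h6
    simp only [← mul_eq_zero]
    rw [← h1, ← h2, ← h3]
    refine ⟨?_, ?_, ?_⟩
    · linear_combination (a 0 * b 0 * c 0) * h4
    · linear_combination (a 0 * b 0 * c 0) * h5
    · linear_combination (a 0 * b 0 * c 0) * h6
  by_cases hxy : B (1, 0, 0) = B (0, 1, 0)
  · refine ⟨-B (1, 0, 0), fun v β g hβ hv h1 h2 h3 h4 h5 h6 h7 => ?_⟩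
    obtain ⟨k, -, -⟩ := key v β g hv h1 h2 h3 h4 h5 h6
    rw [← hxy, or_self] at k
    linear_combination k
  by_cases hxz : B (1, 0, 0) = B (0, 0, 1)
  · refine ⟨-B (1, 0, 0), fun v β g hβ hv h1 h2 h3 h4 h5 h6 h7 => ?_⟩
    obtain ⟨-, k, -⟩ := key v β g hv h1 h2 h3 h4 h5 h6
    rw [← hxz, or_self] at k
    linear_combination k
  refine ⟨-B (0, 1, 0), fun v β g hβ hv h1 h2 h3 h4 h5 h6 h7 => ?_⟩
  obtain ⟨k1, k2, k3⟩ := key v β g hv h1 h2 h3 h4 h5 h6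
  rcases k1 with k1 | k1
  · -- Then `-g = β * B 100` is also one of the other two values, which differ from it.
    rcases k3 with k3 | k3
    · exact absurd (mul_left_cancel₀ hβ (by linear_combination k1 - k3)) hxy
    · exact absurd (mul_left_cancel₀ hβ (by linear_combination k1 - k3)) hxz
  · linear_combination k1

/-! ### Orthonormal expansions and sums of rank-one operators -/

/-- Expansion of a vector in an orthonormal family of full cardinality. -/
lemma orthonormal_expansion {κ ι : Type} [Fintype κ] [DecidableEq κ] [Fintype ι] [DecidableEq ι]
    (hc : Fintype.card κ = Fintype.card ι) (u : κ → ι → ℂ)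
    (hu : ∀ i j, star (u i) ⬝ᵥ u j = if i = j then 1 else 0) (v : ι → ℂ) :
    v = ∑ j, (star (u j) ⬝ᵥ v) • u j := by
  let U : Matrix κ ι ℂ := Matrix.of fun i p => star (u i p)
  have h1 : U * Uᴴ = 1 := by
    ext i j
    rw [Matrix.one_apply, ← hu i j]
    simp [U, Matrix.mul_apply, dotProduct]
  have h2 : Uᴴ * U = 1 := (Matrix.mul_eq_one_comm_of_card_eq _ _ _ hc).1 h1
  calc v = Uᴴ *ᵥ (U *ᵥ v) := by rw [Matrix.mulVec_mulVec, h2, Matrix.one_mulVec]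
    _ = _ := by
      ext p
      simp [U, Matrix.mulVec, dotProduct, Finset.sum_apply, mul_comm]

lemma ketBra_mulVec {ι : Type} [Fintype ι] (v x : ι → ℂ) :
    ketBra v *ᵥ x = (star v ⬝ᵥ x) • v := by
  ext p
  simp [ketBra, Matrix.vecMulVec_mulVec, mul_comm]

lemma trace_mul_ketBra {ι : Type} [Fintype ι] (M : Matrix ι ι ℂ) (x : ι → ℂ) :
    (M * ketBra x).trace = star x ⬝ᵥ (M *ᵥ x) := by
  rw [ketBra, Matrix.mul_vecMulVec, Matrix.trace_vecMulVec, dotProduct_comm]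

lemma sum_ketBra_mulVec {ι : Type} [Fintype ι] {n : ℕ} (v : Fin n → ι → ℂ) (x : ι → ℂ) :
    (∑ i, ketBra (v i)) *ᵥ x = ∑ i, (star (v i) ⬝ᵥ x) • v i := by
  rw [Matrix.sum_mulVec]
  simp only [ketBra_mulVec]

/-- If a sum of operators `|v i⟩⟨v i|` has zero expectation at `x`, every `v i` is orthogonal
to `x`. -/
lemma orthogonal_of_expectation_zero {ι : Type} [Fintype ι] {n : ℕ} (v : Fin n → ι → ℂ)
    (x : ι → ℂ) (h : star x ⬝ᵥ ((∑ i, ketBra (v i)) *ᵥ x) = 0) (i : Fin n) :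
    star (v i) ⬝ᵥ x = 0 := by
  rw [sum_ketBra_mulVec, dotProduct_sum] at h
  have h' : ∀ i, star x ⬝ᵥ ((star (v i) ⬝ᵥ x) • v i)
      = star (star (v i) ⬝ᵥ x) * (star (v i) ⬝ᵥ x) := by
    intro i
    rw [dotProduct_smul, Matrix.star_dotProduct, smul_eq_mul, mul_comm]
    simp [dotProduct_comm]
  simp only [h'] at h
  have := (Finset.sum_eq_zero_iff_of_nonneg (fun i _ => star_mul_self_nonneg _)).1 h i
    (Finset.mem_univ i)
  simpa using this

/-! ### The `W` state and the theorem -/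

/-- The normalized `W` state `(|001⟩ + |010⟩ + |100⟩)/√3`. -/
noncomputable def wState : Fin 2 × Fin 2 × Fin 2 → ℂ :=
  ((1 / Real.sqrt 3 : ℝ) : ℂ) • (ket3 0 0 1 + ket3 0 1 0 + ket3 1 0 0)

lemma wState_norm : star wState ⬝ᵥ wState = 1 := by
  have h3 : (((Real.sqrt 3 : ℝ) : ℂ)) * ((Real.sqrt 3 : ℝ) : ℂ) = 3 := by
    rw [← Complex.ofReal_mul, Real.mul_self_sqrt (by norm_num)]; norm_num
  simp [wState, ket3, dotProduct, Fintype.sum_prod_type, ← mul_inv, h3]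
  norm_num

lemma wState_ket000 : star wState ⬝ᵥ ket3 0 0 0 = 0 := by
  simp [wState, ket3, dotProduct]

lemma ket000_wState : star (ket3 0 0 0) ⬝ᵥ wState = 0 := by
  simp [wState, ket3, dotProduct]

lemma ket000_norm : star (ket3 0 0 0) ⬝ᵥ ket3 0 0 0 = 1 := by
  simp [ket3, dotProduct]

/-- No orthonormal basis of the `6`-dimensional subspace
`span{(|001⟩+|010⟩+|100⟩)/√3, |000⟩}^⊥ ⊆ ℂ² ⊗ ℂ² ⊗ ℂ²` is perfectly
distinguishable by separable operations. -/
theorem dim_six_indistinguishable_subspace :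
    ¬ ∃ B : Fin 6 → Fin 2 × Fin 2 × Fin 2 → ℂ,
      (∀ i j, star (B i) ⬝ᵥ B j = if i = j then 1 else 0) ∧
      (∀ i, star (((1 / Real.sqrt 3 : ℝ) : ℂ) •
        (ket3 0 0 1 + ket3 0 1 0 + ket3 1 0 0)) ⬝ᵥ B i = 0) ∧
      (∀ i, star (ket3 0 0 0) ⬝ᵥ B i = 0) ∧
      PerfDistSep222 (fun k => ketBra (B k)) := by
  rintro ⟨B, hB, hW, h0, M, -, hsep, hsum, htr⟩
  replace hW : ∀ i, star wState ⬝ᵥ B i = 0 := hW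
  have swap : ∀ x y : Fin 2 × Fin 2 × Fin 2 → ℂ, star x ⬝ᵥ y = 0 → star y ⬝ᵥ x = 0 := by
    intro x y h
    rw [Matrix.star_dotProduct, h, star_zero]
  have expand : ∀ v : Fin 2 × Fin 2 × Fin 2 → ℂ, v = ∑ j, (star (B j) ⬝ᵥ v) • B j +
      ((star wState ⬝ᵥ v) • wState + (star (ket3 0 0 0) ⬝ᵥ v) • ket3 0 0 0) := by
    intro v
    have := orthonormal_expansion (κ := Fin 6 ⊕ Fin 2) (by simp)
      (Sum.elim B ![wState, ket3 0 0 0]) (by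
        rintro (i | i) (j | j)
        · simpa using hB i j
        · fin_cases j
          · simpa using swap _ _ (hW i)
          · simpa using swap _ _ (h0 i)
        · fin_cases i
          · simpa using hW j
          · simpa using h0 j
        · fin_cases i <;> fin_cases j <;>
            simp [wState_norm, wState_ket000, ket000_wState, ket000_norm]) v
    simpa [Fintype.sum_sum_type, Fin.sum_univ_two] using this
  have hfix : ∀ k, M k *ᵥ B k = B k := by
    intro k
    have h1 : (∑ l, M l) *ᵥ B k = B k := by rw [hsum, Matrix.one_mulVec]
    rw [Matrix.sum_mulVec, Finset.sum_eq_single k] at h1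
    · exact h1
    · intro l _ hl
      obtain ⟨n, v, -, hv⟩ := hsep l
      have := htr l k
      rw [if_neg hl, trace_mul_ketBra, hv] at this
      rw [hv, sum_ketBra_mulVec]
      exact Finset.sum_eq_zero fun i _ => by
        rw [orthogonal_of_expectation_zero v _ this i, zero_smul]
    · simp
  have hMW : ∀ k, star wState ⬝ᵥ (M k *ᵥ wState) = 0 := by
    intro k
    obtain ⟨n, v, hprod, hv⟩ := hsep k
    have hort : ∀ i j, j ≠ k → star (B j) ⬝ᵥ v i = 0 := by
      intro i j hj
      have := htr k j
      rw [if_neg hj.symm, trace_mul_ketBra, hv] at this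
      exact swap _ _ (orthogonal_of_expectation_zero v _ this i)
    have hspan : ∀ i, v i = (star (B k) ⬝ᵥ v i) • B k +
        ((star wState ⬝ᵥ v i) • wState + (star (ket3 0 0 0) ⬝ᵥ v i) • ket3 0 0 0) := by
      intro i
      conv_lhs => rw [expand (v i)]
      rw [Finset.sum_eq_single k (fun j _ hj => by rw [hort i j hj, zero_smul]) (by simp)]
    obtain ⟨τ, hτ⟩ := exists_coeff_ratio (B k)
    have hs : ((1 / Real.sqrt 3 : ℝ) : ℂ) ≠ 0 := by
      rw [Ne, Complex.ofReal_eq_zero]; positivity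
    have hγ : ∀ i, (star wState ⬝ᵥ v i) * ((1 / Real.sqrt 3 : ℝ) : ℂ)
        = τ * (star (B k) ⬝ᵥ v i) := by
      intro i
      apply hτ (v i) _ _ (hprod i)
      all_goals
        refine (congrFun (hspan i) _).trans ?_
        simp [wState, ket3]
    have hMB := hfix k
    rw [hv, sum_ketBra_mulVec] at hMB
    have hW0 : ∑ i, (star (v i) ⬝ᵥ B k) * (star wState ⬝ᵥ v i) = 0 := by
      have := hW k
      rw [← hMB, dotProduct_sum] at this
      simpa only [dotProduct_smul, smul_eq_mul] using this
    have hB1 : ∑ i, (star (v i) ⬝ᵥ B k) * (star (B k) ⬝ᵥ v i) = 1 := by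
      have : star (B k) ⬝ᵥ ∑ i, (star (v i) ⬝ᵥ B k) • v i = 1 := by
        rw [hMB, hB k k, if_pos rfl]
      rw [dotProduct_sum] at this
      simpa only [dotProduct_smul, smul_eq_mul] using this
    have hτ0 : τ = 0 := by
      calc τ = τ * ∑ i, (star (v i) ⬝ᵥ B k) * (star (B k) ⬝ᵥ v i) := by rw [hB1, mul_one]
        _ = (∑ i, (star (v i) ⬝ᵥ B k) * (star wState ⬝ᵥ v i)) * ((1 / Real.sqrt 3 : ℝ) : ℂ) := by
          rw [Finset.mul_sum, Finset.sum_mul]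
          exact Finset.sum_congr rfl fun i _ => by
            linear_combination (-(star (v i) ⬝ᵥ B k)) * hγ i
        _ = 0 := by rw [hW0, zero_mul]
    have hvW : ∀ i, star wState ⬝ᵥ v i = 0 := by
      intro i
      have := hγ i
      rw [hτ0, zero_mul] at this
      exact (mul_eq_zero.1 this).resolve_right hs
    rw [hv, sum_ketBra_mulVec, dotProduct_sum]
    exact Finset.sum_eq_zero fun i _ => by rw [dotProduct_smul, hvW i, smul_zero]
  have h1 : star wState ⬝ᵥ ((∑ k, M k) *ᵥ wState) = 1 := by
    rw [hsum, Matrix.one_mulVec, wState_norm]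
  rw [Matrix.sum_mulVec, dotProduct_sum, Finset.sum_eq_zero fun k _ => hMW k] at h1
  exact zero_ne_one h1
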